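/- Let P ≥ 1 and define S'(α) = Σ_{x_1,…,x_m ∈ ℤ^n, |x_i| ≤ P} e(Σ_{1≤i≤j≤m} α_{ij}·x_i^T A x_j) for α = (α_{ij})_{1≤i≤j≤m} ∈ ℝ^R. For any ε > 0 there is a constant K (depending only on A, m, n, ε) such that whenever 0 < max_{1≤i≤j≤m}|α_{ij}| < P^{−1}, one has |S'(α)| ≤ K·P^{mn+ε}·(P²·max_{1≤i≤j≤m}|α_{ij}|)^{−n/(2R)}. -/

import Mathlib

open scoped BigOperators
open MeasureTheory Matrix Filter

noncomputable section

/-- Index type for pairs `(i,j)` with `i ≤ j` (the `R = m(m+1)/2` upper-triangular positions). -/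
abbrev Idx (m : ℕ) : Type := {p : Fin m × Fin m // p.1 ≤ p.2}

instance idxNonempty (m : ℕ) [NeZero m] : Nonempty (Idx m) :=
  ⟨⟨(0, 0), le_rfl⟩⟩

/-- `e(z) = exp(2πiz)` -/
def eR (z : ℝ) : ℂ := Complex.exp (2 * Real.pi * Complex.I * z)

/-- `xᵢᵀ A xⱼ` for integer vectors. -/
def quadZ {m n : ℕ} (A : Matrix (Fin n) (Fin n) ℤ) (x : Fin m → Fin n → ℤ)
    (i j : Fin m) : ℤ :=
  ∑ s, ∑ t, x i s * A s t * x j t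

/-- `vᵢᵀ A vⱼ` for real vectors. -/
def quadR {m n : ℕ} (A : Matrix (Fin n) (Fin n) ℤ) (v : Fin m → Fin n → ℝ)
    (i j : Fin m) : ℝ :=
  ∑ s, ∑ t, v i s * (A s t : ℝ) * v j t

/-- The tuple `b = (B_{ij})_{1 ≤ i ≤ j ≤ m}`. -/
def bvec {m : ℕ} (B : Matrix (Fin m) (Fin m) ℤ) (p : Idx m) : ℤ := B p.1.1 p.1.2

/-- `γ_i`, defined by `B₁₁ = B_{ii}^{γ_i}`, i.e. `γ_i = log B₁₁ / log B_{ii}`. -/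
def gamI {m : ℕ} [NeZero m] (B : Matrix (Fin m) (Fin m) ℤ) (i : Fin m) : ℝ :=
  Real.log ((B 0 0 : ℤ) : ℝ) / Real.log ((B i i : ℤ) : ℝ)

/-- `γ = Σ 1/γ_i`. -/
def gamT {m : ℕ} [NeZero m] (B : Matrix (Fin m) (Fin m) ℤ) : ℝ :=
  ∑ i, (gamI B i)⁻¹

/-- `P_i = C^{1/γ_i} B_{ii}^{1/2}`. -/
def PP {m : ℕ} [NeZero m] (C : ℝ) (B : Matrix (Fin m) (Fin m) ℤ) (i : Fin m) : ℝ :=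
  C ^ (gamI B i)⁻¹ * ((B i i : ℤ) : ℝ) ^ ((1 : ℝ) / 2)

/-- `Π = ∏ P_i`. -/
def PiP {m : ℕ} [NeZero m] (C : ℝ) (B : Matrix (Fin m) (Fin m) ℤ) : ℝ :=
  ∏ i, PP C B i

/-- The box of integer tuples `(x₁,…,x_m)` with `|x_i| ≤ P_i` (max-norm). -/
def box (m n : ℕ) [NeZero m] (C : ℝ) (B : Matrix (Fin m) (Fin m) ℤ) :
    Finset (Fin m → Fin n → ℤ) :=
  Finset.Icc (fun i _ => -⌊PP C B i⌋) (fun i _ => ⌊PP C B i⌋)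

/-- The exponential sum `S(α, b)`. -/
def Ssum {m n : ℕ} [NeZero m] (A : Matrix (Fin n) (Fin n) ℤ) (C : ℝ)
    (B : Matrix (Fin m) (Fin m) ℤ) (α : Idx m → ℝ) (b : Idx m → ℤ) : ℂ :=
  ∑ x ∈ box m n C B,
    eR (∑ p : Idx m, α p * ((quadZ A x p.1.1 p.1.2 - b p : ℤ) : ℝ))

/-- The complete exponential sum `S_{a,q}(b)`. -/
def Saq {m n : ℕ} (A : Matrix (Fin n) (Fin n) ℤ) (q : ℤ) (a b : Idx m → ℤ) : ℂ :=
  ∑ z ∈ (Finset.Icc (fun _ _ => 0) (fun _ _ => q - 1) : Finset (Fin m → Fin n → ℤ)),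
    eR ((∑ p : Idx m, (a p : ℝ) * ((quadZ A z p.1.1 p.1.2 - b p : ℤ) : ℝ)) / (q : ℝ))

/-- Residue tuples `a (mod q)` with `gcd(q, a) = 1`. -/
def resid (m : ℕ) (q : ℤ) : Finset (Idx m → ℤ) :=
  (Finset.Icc (fun _ => 0) (fun _ => q - 1)).filter fun a =>
    Int.gcd q (Finset.univ.gcd a) = 1

/-- The `q`-th term of the singular series. -/
def STerm {m n : ℕ} (A : Matrix (Fin n) (Fin n) ℤ) (B : Matrix (Fin m) (Fin m) ℤ)
    (q : ℕ) : ℂ :=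
  ((q : ℂ) ^ (m * n))⁻¹ * ∑ a ∈ resid m (q : ℤ), Saq A (q : ℤ) a (bvec B)

/-- The truncated singular series `𝔖(Q; b)`. -/
def SingT {m n : ℕ} (A : Matrix (Fin n) (Fin n) ℤ) (B : Matrix (Fin m) (Fin m) ℤ)
    (Q : ℝ) : ℂ :=
  ∑ q ∈ Finset.Icc 1 ⌊Q⌋₊, STerm A B q

/-- The singular series `𝔖(b) = Σ_{q=1}^∞ q^{-mn} Σ_{a mod q, (a,q)=1} S_{a,q}(b)`. -/
def Sing {m n : ℕ} (A : Matrix (Fin n) (Fin n) ℤ) (B : Matrix (Fin m) (Fin m) ℤ) : ℂ :=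
  ∑' q : ℕ, STerm A B q

/-- The oscillatory integral `I` with weights `w_p`;
`I(P,β)` is obtained with `w_p = P_iP_jβ_{ij}` and `I(η)` with `w = η`. -/
def Iint {m n : ℕ} (A : Matrix (Fin n) (Fin n) ℤ) (w : Idx m → ℝ) : ℂ :=
  ∫ v in (Set.univ.pi fun _ : Fin m => Set.univ.pi fun _ : Fin n => Set.Icc (-1 : ℝ) 1),
    eR (∑ p : Idx m, w p * quadR A v p.1.1 p.1.2)

/-- The truncated singular integral `𝔍(Q; c)`. -/
def JintT {m n : ℕ} (A : Matrix (Fin n) (Fin n) ℤ) (Q : ℝ) (c : Idx m → ℝ) : ℂ :=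
  ∫ η in (Set.univ.pi fun _ : Idx m => Set.Icc (-Q) Q),
    Iint (n := n) A η * eR (-(∑ p : Idx m, η p * c p))

/-- The singular integral `𝔍(c)`. -/
def Jint {m n : ℕ} (A : Matrix (Fin n) (Fin n) ℤ) (c : Idx m → ℝ) : ℂ :=
  ∫ η : Idx m → ℝ, Iint (n := n) A η * eR (-(∑ p : Idx m, η p * c p))

/-- The major arc `M_{a,q}(Δ)` (with constant `c₀`). -/
def MArc {m : ℕ} [NeZero m] (C : ℝ) (B : Matrix (Fin m) (Fin m) ℤ) (c₀ Δ : ℝ)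
    (q : ℤ) (a : Idx m → ℤ) : Set (Idx m → ℝ) :=
  {α | (∀ p, 0 ≤ α p ∧ α p < 1) ∧
    ∀ p : Idx m, |(q : ℝ) * α p - (a p : ℝ)| ≤
      c₀ * PiP C B ^ Δ * (PP C B p.1.1 * PP C B p.1.2)⁻¹}

/-- The enlarged major arc `M'_{a,q}(Δ)` (with constant `c₀`). -/
def MArc' {m : ℕ} [NeZero m] (C : ℝ) (B : Matrix (Fin m) (Fin m) ℤ) (c₀ Δ : ℝ)
    (q : ℤ) (a : Idx m → ℤ) : Set (Idx m → ℝ) :=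
  {α | (∀ p, 0 ≤ α p ∧ α p < 1) ∧
    ∀ p : Idx m, |(q : ℝ) * α p - (a p : ℝ)| ≤
      c₀ * (q : ℝ) * PiP C B ^ Δ * (PP C B p.1.1 * PP C B p.1.2)⁻¹}

/-- Admissible pairs `(q, a)`: `1 ≤ q ≤ c₀Π^Δ`, `0 ≤ a_{ij} < q`, `gcd(q,a) = 1`. -/
def validAQ {m : ℕ} [NeZero m] (C : ℝ) (B : Matrix (Fin m) (Fin m) ℤ) (c₀ Δ : ℝ)
    (q : ℤ) (a : Idx m → ℤ) : Prop :=
  1 ≤ q ∧ (q : ℝ) ≤ c₀ * PiP C B ^ Δ ∧ (∀ p, 0 ≤ a p ∧ a p < q) ∧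
    Int.gcd q (Finset.univ.gcd a) = 1

/-- The major arcs `M(Δ)`. -/
def MSet {m : ℕ} [NeZero m] (C : ℝ) (B : Matrix (Fin m) (Fin m) ℤ) (c₀ Δ : ℝ) :
    Set (Idx m → ℝ) :=
  ⋃ q : ℤ, ⋃ a : Idx m → ℤ, ⋃ _ : validAQ C B c₀ Δ q a, MArc C B c₀ Δ q a

/-- `N(A,B)`: the number of integral representations of `B` by `A`. -/
def NAB (m n : ℕ) (A : Matrix (Fin n) (Fin n) ℤ) (B : Matrix (Fin m) (Fin m) ℤ) : ℕ :=
  Nat.card {X : Matrix (Fin n) (Fin m) ℤ | Xᵀ * A * X = B}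

/-- `#{X mod q : XᵀAX ≡ B (mod q)}`. -/
def locCount (m n : ℕ) (A : Matrix (Fin n) (Fin n) ℤ) (B : Matrix (Fin m) (Fin m) ℤ)
    (q : ℕ) : ℕ :=
  Nat.card {X : Matrix (Fin n) (Fin m) (ZMod q) |
    Xᵀ * A.map ((↑) : ℤ → ZMod q) * X = B.map ((↑) : ℤ → ZMod q)}

/-- The archimedean density `α_∞(A,B)`. -/
def alphaInf (m n : ℕ) (A : Matrix (Fin n) (Fin n) ℤ)
    (B : Matrix (Fin m) (Fin m) ℤ) : ℝ :=
  ((A.det : ℤ) : ℝ) ^ (-(m : ℝ) / 2) * ((B.det : ℤ) : ℝ) ^ (((n : ℝ) - m - 1) / 2) *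
    Real.pi ^ ((m : ℝ) * (2 * (n : ℝ) - m + 1) / 4) *
    ∏ j ∈ Finset.Ioc (n - m) n, (Real.Gamma ((j : ℝ) / 2))⁻¹

/-- `max_{1≤i≤j≤m} |η_{ij}|`. -/
def maxAbs {m : ℕ} [NeZero m] (η : Idx m → ℝ) : ℝ := ⨆ p : Idx m, |η p|

lemma eR_add (a b : ℝ) : eR (a + b) = eR a * eR b := by
  simp only [eR, ← Complex.exp_add]
  push_cast
  ring_nf

lemma norm_eR (a : ℝ) : ‖eR a‖ = 1 := by
  have h : eR a = Complex.exp ((2 * Real.pi * a : ℝ) * Complex.I) := by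
    simp only [eR]
    push_cast
    ring_nf
  rw [h, Complex.norm_exp_ofReal_mul_I]

lemma eR_intCast (a : ℤ) : eR a = 1 := by
  rw [eR, Complex.exp_eq_one_iff]
  exact ⟨a, by push_cast; ring⟩

lemma conj_eR (a : ℝ) : (starRingEnd ℂ) (eR a) = eR (-a) := by
  simp [eR, ← Complex.exp_conj, Complex.conj_ofNat]

lemma eR_sum {ι : Type*} (s : Finset ι) (f : ι → ℝ) :
    eR (∑ i ∈ s, f i) = ∏ i ∈ s, eR (f i) := by
  simp only [eR, ← Complex.exp_sum]
  push_cast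
  rw [Finset.mul_sum]

lemma four_mul_abs_sub_round_le (θ : ℝ) : 4 * |θ - round θ| ≤ ‖eR θ - 1‖ := by
  set t := θ - round θ with ht
  have h1 : eR θ = eR t := by
    have : θ = t + (round θ : ℤ) := by rw [ht]; ring
    rw [this, eR_add, eR_intCast, mul_one]
  have h2 : eR t = Complex.exp (Complex.I * (2 * Real.pi * t : ℝ)) := by
    simp only [eR]
    push_cast
    ring_nf
  have h3 : |t| ≤ 1 / 2 := abs_sub_round θ
  have hpi := Real.pi_pos
  have h4 := Real.mul_abs_le_abs_sin (x := Real.pi * t) (by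
    rw [abs_mul, abs_of_pos hpi]; nlinarith)
  rw [h1, h2, Complex.norm_exp_I_mul_ofReal_sub_one, norm_mul, Real.norm_eq_abs, Real.norm_eq_abs,
    abs_two, show 2 * Real.pi * t / 2 = Real.pi * t by ring]
  rw [abs_mul, abs_of_pos hpi, ← mul_assoc, div_mul_cancel₀ _ hpi.ne'] at h4
  linarith

lemma sum_Icc_int_telescope (f : ℤ → ℂ) (u v : ℤ) (h : u ≤ v) :
    ∑ y ∈ Finset.Icc u v, (f (y + 1) - f y) = f (v + 1) - f u := by
  induction v, h using Int.leInduction with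
  | base => simp
  | succ v hv ih =>
    have : Finset.Icc u (v + 1) = insert (v + 1) (Finset.Icc u v) := by
      ext; simp; omega
    rw [this, Finset.sum_insert (by simp), ih]
    ring

lemma norm_sum_eR_mul_abs_sub_round_le (θ : ℝ) (u v : ℤ) :
    ‖∑ y ∈ Finset.Icc u v, eR (θ * y)‖ * |θ - round θ| ≤ 1 := by
  rcases lt_or_ge v u with h | h
  · simp [Finset.Icc_eq_empty (not_le.mpr h)]
  have key : (∑ y ∈ Finset.Icc u v, eR (θ * y)) * (eR θ - 1)
      = eR (θ * (v + 1 : ℤ)) - eR (θ * u) := by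
    rw [← sum_Icc_int_telescope (fun y => eR (θ * y)) u v h, Finset.sum_mul]
    refine Finset.sum_congr rfl fun y _ => ?_
    push_cast
    rw [mul_add, mul_one, eR_add]
    ring
  have h2 : ‖∑ y ∈ Finset.Icc u v, eR (θ * y)‖ * ‖eR θ - 1‖ ≤ 2 := by
    rw [← norm_mul, key]
    refine (norm_sub_le _ _).trans ?_
    rw [norm_eR, norm_eR]
    norm_num
  have h3 := mul_le_mul_of_nonneg_left (four_mul_abs_sub_round_le θ)
    (norm_nonneg (∑ y ∈ Finset.Icc u v, eR (θ * y)))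
  linarith

/-- A smooth substitute for `min M (1 / ‖θ‖)`, where `‖θ‖` is the distance to the nearest integer. -/
def geomWeight (M θ : ℝ) : ℝ := 2 * M / (1 + M * |θ - round θ|)

lemma geomWeight_nonneg {M : ℝ} (hM : 0 ≤ M) (θ : ℝ) : 0 ≤ geomWeight M θ := by
  unfold geomWeight
  positivity

lemma norm_sum_eR_le_geomWeight {M : ℝ} (hM : 0 ≤ M) (θ : ℝ) (u v : ℤ)
    (huv : ((Finset.Icc u v).card : ℝ) ≤ M) :
    ‖∑ y ∈ Finset.Icc u v, eR (θ * y)‖ ≤ geomWeight M θ := by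
  have h1 : ‖∑ y ∈ Finset.Icc u v, eR (θ * y)‖ ≤ M := by
    refine (norm_sum_le _ _).trans ?_
    simpa [norm_eR] using huv
  have h2 := norm_sum_eR_mul_abs_sub_round_le θ u v
  rw [geomWeight, le_div_iff₀ (by positivity)]
  nlinarith

lemma norm_sum_box_eR_le {n : ℕ} {M : ℝ} (hM : 0 ≤ M) (θ : Fin n → ℝ) (u v : Fin n → ℤ)
    (huv : ∀ s, ((Finset.Icc (u s) (v s)).card : ℝ) ≤ M) :
    ‖∑ y ∈ Finset.Icc u v, eR (∑ s, θ s * y s)‖ ≤ ∏ s, geomWeight M (θ s) := by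
  have h : ∑ y ∈ Finset.Icc u v, eR (∑ s, θ s * y s)
      = ∏ s, ∑ y ∈ Finset.Icc (u s) (v s), eR (θ s * y) := by
    rw [Finset.prod_univ_sum]
    exact Finset.sum_congr rfl fun y _ => eR_sum _ _
  rw [h, norm_prod]
  exact Finset.prod_le_prod (fun _ _ => norm_nonneg _)
    fun s _ => norm_sum_eR_le_geomWeight hM _ _ _ (huv s)

lemma sum_Icc_natAbs_le (D : ℕ) (g : ℕ → ℝ) (hg : ∀ k, 0 ≤ g k) :
    ∑ d ∈ Finset.Icc (-D : ℤ) D, g d.natAbs ≤ 2 * ∑ k ∈ Finset.range (D + 1), g k := by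
  rw [← Finset.sum_fiberwise_of_maps_to (s := Finset.Icc (-D : ℤ) D) (t := Finset.range (D + 1))
    (g := Int.natAbs) (by intro d hd; simp at hd ⊢; omega), Finset.mul_sum]
  refine Finset.sum_le_sum fun k _ => ?_
  rw [Finset.sum_congr rfl (g := fun _ => g k) (by intro d hd; rw [(Finset.mem_filter.mp hd).2]),
    Finset.sum_const, nsmul_eq_mul]
  refine mul_le_mul_of_nonneg_right ?_ (hg k)
  have hsub : (Finset.Icc (-D : ℤ) D).filter (fun d => d.natAbs = k) ⊆ {(k : ℤ), -(k : ℤ)} := by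
    intro d hd
    simp at hd ⊢
    omega
  exact_mod_cast (Finset.card_le_card hsub).trans Finset.card_le_two

lemma sum_range_div_one_add_le {M b : ℝ} (hM : 0 < M) (hb : 0 < b) (D : ℕ) :
    ∑ k ∈ Finset.range (D + 1), 2 * M / (1 + M * (b * k)) ≤
      2 * M + 2 / b * (1 + Real.log D) := by
  have hH := harmonic_le_one_add_log D
  have h1 : ∑ k ∈ Finset.range D, 2 * M / (1 + M * (b * (k + 1 : ℕ))) ≤ 2 / b * harmonic D := by
    rw [harmonic]
    push_cast
    rw [Finset.mul_sum]
    refine Finset.sum_le_sum fun k _ => ?_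
    rw [← div_eq_mul_inv, div_div, div_le_div_iff₀ (by positivity) (by positivity)]
    nlinarith
  rw [Finset.sum_range_succ']
  have h2 : 2 / b * (harmonic D : ℝ) ≤ 2 / b * (1 + Real.log D) :=
    mul_le_mul_of_nonneg_left hH (by positivity)
  simp only [Nat.cast_zero, mul_zero, add_zero, div_one]
  linarith

lemma sum_geomWeight_fiber_le {M β : ℝ} (hM : 0 < M) (hβ : β ≠ 0) (L : ℕ) (a : ℤ) :
    ∑ k ∈ (Finset.Icc (-L : ℤ) L).filter (fun k : ℤ => round (β * k) = a), geomWeight M (β * k) ≤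
      4 * M + 8 / |β| * (1 + Real.log (2 * L : ℕ)) := by
  have hb : 0 < |β| / 2 := by positivity
  set E := (Finset.Icc (-L : ℤ) L).filter (fun k : ℤ => round (β * k) = a) with hE
  have hlog : 0 ≤ Real.log (2 * L : ℕ) := Real.log_natCast_nonneg _
  rcases E.eq_empty_or_nonempty with h0 | h0
  · rw [h0, Finset.sum_empty]
    positivity
  obtain ⟨k₀, hk₀, hmin⟩ := E.exists_min_image (fun k : ℤ => |β * k - a|) h0
  have hpt : ∀ k ∈ E, geomWeight M (β * k) ≤
      2 * M / (1 + M * (|β| / 2 * ((k - k₀).natAbs : ℕ))) := by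
    intro k hk
    have hka : round (β * k) = a := (Finset.mem_filter.mp hk).2
    have h1 := hmin k hk
    have h2 : |β| * |(k : ℝ) - k₀| ≤ |β * k - a| + |β * k₀ - a| := by
      rw [← abs_mul, show β * ((k : ℝ) - k₀) = (β * k - a) - (β * k₀ - a) by ring]
      exact abs_sub _ _
    have h3 : (((k - k₀).natAbs : ℕ) : ℝ) = |(k : ℝ) - k₀| := by
      rw [Nat.cast_natAbs]
      push_cast
      rfl
    rw [geomWeight, hka, h3]
    gcongr
    linarith
  refine (Finset.sum_le_sum hpt).trans ?_
  have hinj : ∑ k ∈ E, 2 * M / (1 + M * (|β| / 2 * ((k - k₀).natAbs : ℕ))) ≤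
      ∑ d ∈ Finset.Icc (-(2 * L : ℕ) : ℤ) (2 * L : ℕ),
        2 * M / (1 + M * (|β| / 2 * (d.natAbs : ℕ))) := by
    rw [← Finset.sum_image (s := E) (g := fun k => k - k₀)
      (f := fun d : ℤ => 2 * M / (1 + M * (|β| / 2 * (d.natAbs : ℕ))))
      (fun x _ y _ h => by simpa using h)]
    refine Finset.sum_le_sum_of_subset_of_nonneg ?_ fun _ _ _ => by positivity
    intro d hd
    obtain ⟨k, hk, rfl⟩ := Finset.mem_image.mp hd
    have h1 := (Finset.mem_filter.mp hk).1
    have h2 := (Finset.mem_filter.mp hk₀).1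
    simp only [Finset.mem_Icc] at h1 h2 ⊢
    omega
  refine hinj.trans ((sum_Icc_natAbs_le (2 * L)
    (fun k => 2 * M / (1 + M * (|β| / 2 * k))) fun _ => by positivity).trans ?_)
  refine (mul_le_mul_of_nonneg_left (sum_range_div_one_add_le hM hb (2 * L))
    zero_le_two).trans (le_of_eq ?_)
  field_simp
  ring

lemma sum_geomWeight_le {M β : ℝ} (hM : 0 < M) (hβ : β ≠ 0) (L Z : ℕ) (hZ : |β| * L ≤ Z) :
    ∑ k ∈ Finset.Icc (-L : ℤ) L, geomWeight M (β * k) ≤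
      (2 * Z + 3) * (4 * M + 8 / |β| * (1 + Real.log (2 * L : ℕ))) := by
  rw [← Finset.sum_fiberwise_of_maps_to (s := Finset.Icc (-L : ℤ) L)
    (t := Finset.Icc (-(Z + 1) : ℤ) (Z + 1)) (g := fun k : ℤ => round (β * k))]
  · refine (Finset.sum_le_sum fun a _ => sum_geomWeight_fiber_le hM hβ L a).trans ?_
    rw [Finset.sum_const, nsmul_eq_mul, Int.card_Icc]
    refine le_of_eq ?_
    congr 1
    rw [show ((Z : ℤ) + 1 + 1 - -(Z + 1)).toNat = 2 * Z + 3 by omega]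
    push_cast
    ring
  · intro k hk
    rw [Finset.mem_Icc] at hk
    have h1 : |(k : ℝ)| ≤ L := by
      rw [abs_le]
      exact ⟨by exact_mod_cast hk.1, by exact_mod_cast hk.2⟩
    have h2 : |β * k| ≤ Z := by
      rw [abs_mul]
      exact (mul_le_mul_of_nonneg_left h1 (abs_nonneg β)).trans hZ
    have h3 := abs_le.mp (abs_sub_round (β * k))
    have h4 := abs_le.mp h2
    rw [Finset.mem_Icc]
    constructor
    · have : (-((Z : ℤ) + 1) : ℝ) ≤ round (β * k) := by push_cast; linarith
      exact_mod_cast this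
    · have : (round (β * k) : ℝ) ≤ ((Z : ℤ) + 1 : ℝ) := by push_cast; linarith
      exact_mod_cast this

lemma sum_norm_bilinear_le {n : ℕ} (A : Matrix (Fin n) (Fin n) ℤ) (hA : A.det ≠ 0) (c N : ℕ)
    (hc : ∀ t, ∑ s, |A s t| ≤ c) {M : ℝ} (hM : 0 ≤ M) (β : ℝ)
    (u v : (Fin n → ℤ) → Fin n → ℤ)
    (huv : ∀ h s, ((Finset.Icc (u h s) (v h s)).card : ℝ) ≤ M) :
    ∑ h ∈ Finset.Icc (fun _ => -(2 * N : ℤ)) (fun _ => (2 * N : ℤ)),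
        ‖∑ y ∈ Finset.Icc (u h) (v h), eR (β * (h ⬝ᵥ A *ᵥ y : ℤ))‖ ≤
      (∑ k ∈ Finset.Icc (-(c * (2 * N) : ℕ) : ℤ) (c * (2 * N) : ℕ), geomWeight M (β * k)) ^ n := by
  have hbox : ∀ h : Fin n → ℤ, ‖∑ y ∈ Finset.Icc (u h) (v h), eR (β * (h ⬝ᵥ A *ᵥ y : ℤ))‖ ≤
      ∏ s, geomWeight M (β * (h ᵥ* A) s) := by
    intro h
    refine le_trans (le_of_eq ?_)
      (norm_sum_box_eR_le hM (fun s => β * (h ᵥ* A) s) (u h) (v h) (huv h))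
    congr 1
    refine Finset.sum_congr rfl fun y _ => ?_
    rw [dotProduct_mulVec, dotProduct]
    push_cast
    rw [Finset.mul_sum]
    simp only [mul_assoc]
  refine (Finset.sum_le_sum fun h _ => hbox h).trans ?_
  have hpow := Finset.sum_pow' (Finset.Icc (-(c * (2 * N) : ℕ) : ℤ) (c * (2 * N) : ℕ))
    (fun k : ℤ => geomWeight M (β * k)) n
  rw [hpow]
  have hinj : Function.Injective fun h : Fin n → ℤ => h ᵥ* A := by
    intro x y hxy
    refine sub_eq_zero.mp (Matrix.eq_zero_of_vecMul_eq_zero hA ?_)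
    rw [Matrix.sub_vecMul]
    exact sub_eq_zero.mpr hxy
  rw [← Finset.sum_image (g := fun h : Fin n → ℤ => h ᵥ* A)
    (f := fun k : Fin n → ℤ => ∏ s, geomWeight M (β * k s)) hinj.injOn]
  refine Finset.sum_le_sum_of_subset_of_nonneg ?_
    fun _ _ _ => Finset.prod_nonneg fun _ _ => geomWeight_nonneg hM _
  intro k hk
  obtain ⟨h, hh, rfl⟩ := Finset.mem_image.mp hk
  rw [Finset.mem_Icc, Pi.le_def, Pi.le_def] at hh
  rw [Fintype.mem_piFinset]
  intro t
  rw [Finset.mem_Icc, ← abs_le]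
  have h1 : |(h ᵥ* A) t| ≤ ∑ s, (2 * N : ℤ) * |A s t| := by
    refine (Finset.abs_sum_le_sum_abs (fun s => h s * A s t) _).trans (Finset.sum_le_sum fun s _ => ?_)
    rw [abs_mul]
    exact mul_le_mul_of_nonneg_right (abs_le.mpr ⟨hh.1 s, hh.2 s⟩) (abs_nonneg _)
  rw [← Finset.mul_sum] at h1
  have h2 := mul_le_mul_of_nonneg_left (hc t) (by positivity : (0 : ℤ) ≤ 2 * N)
  push_cast
  linarith

lemma norm_eR_add_const_sum {ι : Type*} (s : Finset ι) (f : ι → ℝ) (a : ℝ) :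
    ‖∑ y ∈ s, eR (f y + a)‖ = ‖∑ y ∈ s, eR (f y)‖ := by
  simp only [eR_add, ← Finset.sum_mul, norm_mul, norm_eR, mul_one]

lemma normSq_sum_eR {ι : Type*} (s : Finset ι) (f : ι → ℝ) :
    ((‖∑ y ∈ s, eR (f y)‖ ^ 2 : ℝ) : ℂ) = ∑ y ∈ s, ∑ z ∈ s, eR (f z - f y) := by
  push_cast
  rw [← Complex.conj_mul', map_sum, Finset.sum_mul_sum]
  refine Finset.sum_congr rfl fun y _ => Finset.sum_congr rfl fun z _ => ?_
  rw [conj_eR, ← eR_add]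
  ring_nf

/-- Weyl differencing for a phase whose second differences are given by a bilinear form. -/
lemma norm_sum_quadratic_sq_le {n : ℕ} (A : Matrix (Fin n) (Fin n) ℤ) (hA : A.det ≠ 0) (c N : ℕ)
    (hc : ∀ t, ∑ s, |A s t| ≤ c) (β : ℝ) (ψ : (Fin n → ℤ) → ℝ)
    (hψ : ∀ y h, ψ (y + h) - ψ y = β * (h ⬝ᵥ A *ᵥ y : ℤ) + (ψ h - ψ 0)) :
    ‖∑ y ∈ Finset.Icc (fun _ => -(N : ℤ)) (fun _ => (N : ℤ)), eR (ψ y)‖ ^ 2 ≤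
      (∑ k ∈ Finset.Icc (-(c * (2 * N) : ℕ) : ℤ) (c * (2 * N) : ℕ),
        geomWeight (2 * N + 1) (β * k)) ^ n := by
  have key : ((‖∑ y ∈ Finset.Icc (fun _ => -(N : ℤ)) (fun _ => (N : ℤ)), eR (ψ y)‖ ^ 2 : ℝ) : ℂ)
      = ∑ h ∈ Finset.Icc (fun _ : Fin n => -(2 * N : ℤ)) (fun _ => (2 * N : ℤ)),
        ∑ y ∈ Finset.Icc (fun s => max (-(N : ℤ)) (-N - h s)) (fun s => min (N : ℤ) (N - h s)),
          eR (β * (h ⬝ᵥ A *ᵥ y : ℤ) + (ψ h - ψ 0)) := by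
    rw [normSq_sum_eR]
    have hshift : ∀ y : Fin n → ℤ,
        ∑ z ∈ Finset.Icc (fun _ => -(N : ℤ)) (fun _ => (N : ℤ)), eR (ψ z - ψ y)
        = ∑ h ∈ Finset.Icc (fun s => -(N : ℤ) - y s) (fun s => (N : ℤ) - y s),
          eR (β * (h ⬝ᵥ A *ᵥ y : ℤ) + (ψ h - ψ 0)) := by
      intro y
      refine Finset.sum_nbij' (fun z => z - y) (fun h => y + h) ?_ ?_ ?_ ?_ ?_
      · intro z hz
        simp only [Finset.mem_Icc, Pi.le_def, Pi.sub_apply] at hz ⊢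
        exact ⟨fun s => by have := hz.1 s; omega, fun s => by have := hz.2 s; omega⟩
      · intro z hz
        simp only [Finset.mem_Icc, Pi.le_def, Pi.add_apply] at hz ⊢
        exact ⟨fun s => by have := hz.1 s; omega, fun s => by have := hz.2 s; omega⟩
      · intro z _
        abel
      · intro z _
        abel
      · intro z _
        rw [← hψ, add_sub_cancel]
    rw [Finset.sum_congr rfl fun y _ => hshift y]
    refine Finset.sum_comm' fun y h => ?_
    simp only [Finset.mem_Icc, Pi.le_def]
    constructor
    · rintro ⟨⟨h1, h2⟩, h3, h4⟩
      refine ⟨⟨fun s => ?_, fun s => ?_⟩, fun s => ?_, fun s => ?_⟩ <;>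
        (have := h1 s; have := h2 s; have := h3 s; have := h4 s; omega)
    · rintro ⟨⟨h1, h2⟩, h3, h4⟩
      refine ⟨⟨fun s => ?_, fun s => ?_⟩, fun s => ?_, fun s => ?_⟩ <;>
        (have := h1 s; have := h2 s; have := h3 s; have := h4 s; omega)
  have hnorm := congrArg norm key
  rw [Complex.norm_real, Real.norm_of_nonneg (by positivity)] at hnorm
  rw [hnorm]
  refine (norm_sum_le _ _).trans ?_
  simp only [norm_eR_add_const_sum]
  refine sum_norm_bilinear_le A hA c N hc (by positivity) β _ _ fun h s => ?_
  rw [Int.card_Icc]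
  have : (min (N : ℤ) (N - h s) + 1 - max (-(N : ℤ)) (-N - h s)).toNat ≤ 2 * N + 1 := by omega
  exact_mod_cast this

/-- Cauchy's inequality for a phase whose mixed differences are given by a bilinear form. -/
lemma norm_sum_mixed_sq_le {n : ℕ} (A : Matrix (Fin n) (Fin n) ℤ) (hA : A.det ≠ 0) (c N : ℕ)
    (hc : ∀ t, ∑ s, |A s t| ≤ c) (β : ℝ) (f g : (Fin n → ℤ) → ℝ) :
    ‖∑ y ∈ Finset.Icc (fun _ => -(N : ℤ)) (fun _ => (N : ℤ)),
      ∑ z ∈ Finset.Icc (fun _ => -(N : ℤ)) (fun _ => (N : ℤ)),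
        eR (β * (z ⬝ᵥ A *ᵥ y : ℤ) + f y + g z)‖ ^ 2 ≤
      ((Finset.Icc (fun _ : Fin n => -(N : ℤ)) (fun _ => (N : ℤ))).card : ℝ) ^ 2 *
      (∑ k ∈ Finset.Icc (-(c * (2 * N) : ℕ) : ℤ) (c * (2 * N) : ℕ),
        geomWeight (2 * N + 1) (β * k)) ^ n := by
  set B := Finset.Icc (fun _ : Fin n => -(N : ℤ)) (fun _ => (N : ℤ)) with hB
  set G : (Fin n → ℤ) → ℝ := fun h => ‖∑ y ∈ B, eR (β * (h ⬝ᵥ A *ᵥ y : ℤ))‖ with hG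
  have hcauchy : ‖∑ y ∈ B, ∑ z ∈ B, eR (β * (z ⬝ᵥ A *ᵥ y : ℤ) + f y + g z)‖ ^ 2 ≤
      B.card * ∑ y ∈ B, ‖∑ z ∈ B, eR (β * (z ⬝ᵥ A *ᵥ y : ℤ) + f y + g z)‖ ^ 2 :=
    (pow_le_pow_left₀ (norm_nonneg _) (norm_sum_le _ _) 2).trans sq_sum_le_card_mul_sum_sq
  have hopen : ∑ y ∈ B, ‖∑ z ∈ B, eR (β * (z ⬝ᵥ A *ᵥ y : ℤ) + f y + g z)‖ ^ 2 ≤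
      ∑ w ∈ B, ∑ z ∈ B, G (z - w) := by
    have key : ((∑ y ∈ B, ‖∑ z ∈ B, eR (β * (z ⬝ᵥ A *ᵥ y : ℤ) + f y + g z)‖ ^ 2 : ℝ) : ℂ) =
        ∑ w ∈ B, ∑ z ∈ B, ∑ y ∈ B,
          eR (β * ((z - w) ⬝ᵥ A *ᵥ y : ℤ) + (g z - g w)) := by
      rw [Complex.ofReal_sum, Finset.sum_congr rfl fun y _ => normSq_sum_eR _ _, Finset.sum_comm]
      refine Finset.sum_congr rfl fun w _ => ?_
      rw [Finset.sum_comm]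
      refine Finset.sum_congr rfl fun z _ => Finset.sum_congr rfl fun y _ => ?_
      rw [sub_dotProduct]
      push_cast
      ring_nf
    have hnorm := congrArg norm key
    rw [Complex.norm_real, Real.norm_of_nonneg (by positivity)] at hnorm
    rw [hnorm]
    refine (norm_sum_le _ _).trans (Finset.sum_le_sum fun w _ => ?_)
    refine (norm_sum_le _ _).trans (Finset.sum_le_sum fun z _ => ?_)
    rw [norm_eR_add_const_sum]
  have hdiff : ∀ w ∈ B, ∑ z ∈ B, G (z - w) ≤
      ∑ h ∈ Finset.Icc (fun _ => -(2 * N : ℤ)) (fun _ => (2 * N : ℤ)), G h := by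
    intro w hw
    rw [← Finset.sum_image (g := fun z => z - w) (f := G) (fun x _ y _ h => by simpa using h)]
    refine Finset.sum_le_sum_of_subset_of_nonneg ?_ fun _ _ _ => norm_nonneg _
    intro d hd
    obtain ⟨z, hz, rfl⟩ := Finset.mem_image.mp hd
    simp only [hB, Finset.mem_Icc, Pi.le_def, Pi.sub_apply] at hw hz ⊢
    refine ⟨fun s => ?_, fun s => ?_⟩ <;>
      (have := hw.1 s; have := hw.2 s; have := hz.1 s; have := hz.2 s; omega)
  have hG' := sum_norm_bilinear_le A hA c N hc (M := 2 * N + 1) (by positivity) β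
    (fun _ _ => -(N : ℤ)) (fun _ _ => (N : ℤ)) (fun h s => by
      rw [Int.card_Icc, show ((N : ℤ) + 1 - -N).toNat = 2 * N + 1 by omega]
      push_cast
      rfl)
  have hsum : ∑ w ∈ B, ∑ z ∈ B, G (z - w) ≤ B.card * (∑ k ∈ Finset.Icc
      (-(c * (2 * N) : ℕ) : ℤ) (c * (2 * N) : ℕ), geomWeight (2 * N + 1) (β * k)) ^ n := by
    refine (Finset.sum_le_sum fun w hw => (hdiff w hw).trans hG').trans (le_of_eq ?_)
    rw [Finset.sum_const, nsmul_eq_mul]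
  refine hcauchy.trans ?_
  rw [sq, mul_assoc]
  exact mul_le_mul_of_nonneg_left (hopen.trans hsum) (Nat.cast_nonneg _)

lemma card_mul_sum_piFinset {ι V : Type*} [Fintype ι] [DecidableEq ι] (B : Finset V) (i : ι)
    (F : (ι → V) → ℂ) :
    B.card * ∑ x ∈ Fintype.piFinset (fun _ : ι => B), F x =
      ∑ x ∈ Fintype.piFinset (fun _ : ι => B), ∑ y ∈ B, F (Function.update x i y) := by
  have h : ∑ q ∈ Fintype.piFinset (fun _ : ι => B) ×ˢ B, F (Function.update q.1 i q.2) =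
      ∑ q ∈ Fintype.piFinset (fun _ : ι => B) ×ˢ B, F q.1 := by
    have hmem : ∀ q ∈ Fintype.piFinset (fun _ : ι => B) ×ˢ B,
        (Function.update q.1 i q.2, q.1 i) ∈ Fintype.piFinset (fun _ : ι => B) ×ˢ B := by
      intro q hq
      simp only [Finset.mem_product, Fintype.mem_piFinset] at hq ⊢
      refine ⟨fun a => ?_, hq.1 i⟩
      rcases eq_or_ne a i with rfl | ha
      · simpa using hq.2
      · simpa [ha] using hq.1 a
    exact Finset.sum_nbij' (fun q => (Function.update q.1 i q.2, q.1 i))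
      (fun q => (Function.update q.1 i q.2, q.1 i)) hmem hmem
      (fun q _ => by simp) (fun q _ => by simp) (fun q _ => rfl)
  rw [Finset.sum_product, Finset.sum_product] at h
  rw [h]
  simp [Finset.mul_sum]

lemma card_mul_norm_sum_piFinset_le {ι V : Type*} [Fintype ι] [DecidableEq ι] (B : Finset V)
    (i : ι) (F : (ι → V) → ℂ) (T : ℝ)
    (hT : ∀ x, ‖∑ y ∈ B, F (Function.update x i y)‖ ≤ T) :
    B.card * ‖∑ x ∈ Fintype.piFinset (fun _ : ι => B), F x‖ ≤
      (B.card : ℝ) ^ Fintype.card ι * T := by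
  have h := congrArg norm (card_mul_sum_piFinset B i F)
  rw [norm_mul, Complex.norm_natCast] at h
  rw [h]
  refine (norm_sum_le _ _).trans ((Finset.sum_le_sum fun x _ => hT x).trans (le_of_eq ?_))
  simp

lemma card_mul_norm_sum_piFinset_le₂ {ι V : Type*} [Fintype ι] [DecidableEq ι] (B : Finset V)
    (i j : ι) (F : (ι → V) → ℂ) (T : ℝ)
    (hT : ∀ x, ‖∑ y ∈ B, ∑ z ∈ B, F (Function.update (Function.update x i y) j z)‖ ≤ B.card * T) :
    B.card * ‖∑ x ∈ Fintype.piFinset (fun _ : ι => B), F x‖ ≤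
      (B.card : ℝ) ^ Fintype.card ι * T := by
  rcases B.eq_empty_or_nonempty with h0 | h0
  · rcases isEmpty_or_nonempty ι with hι | hι
    · exact (hι.false i).elim
    · simp [h0, Fintype.card_ne_zero]
  have hpos : (0 : ℝ) < B.card := by exact_mod_cast h0.card_pos
  have h := card_mul_norm_sum_piFinset_le B i
    (fun x => ∑ z ∈ B, F (Function.update x j z)) (B.card * T) hT
  rw [← card_mul_sum_piFinset B j F, norm_mul, Complex.norm_natCast] at h
  refine le_of_mul_le_mul_left ?_ hpos
  linarith

lemma quadZ_eq_dotProduct {m n : ℕ} (A : Matrix (Fin n) (Fin n) ℤ) (x : Fin m → Fin n → ℤ)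
    (i j : Fin m) : quadZ A x i j = x i ⬝ᵥ A *ᵥ x j := by
  simp only [quadZ, dotProduct, mulVec, Finset.mul_sum, mul_assoc]

lemma phase_update_diag {m n : ℕ} (A : Matrix (Fin n) (Fin n) ℤ) (hAs : A.IsSymm)
    (α : Idx m → ℝ) (p : Idx m) (hp : p.1.1 = p.1.2) (x : Fin m → Fin n → ℤ) (y h : Fin n → ℤ) :
    (∑ q : Idx m, α q * (quadZ A (Function.update x p.1.1 (y + h)) q.1.1 q.1.2 : ℝ)) -
      ∑ q : Idx m, α q * (quadZ A (Function.update x p.1.1 y) q.1.1 q.1.2 : ℝ) =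
    2 * α p * (h ⬝ᵥ A *ᵥ y : ℤ) +
      ((∑ q : Idx m, α q * (quadZ A (Function.update x p.1.1 h) q.1.1 q.1.2 : ℝ)) -
        ∑ q : Idx m, α q * (quadZ A (Function.update x p.1.1 0) q.1.1 q.1.2 : ℝ)) := by
  have hsymm : y ⬝ᵥ A *ᵥ h = h ⬝ᵥ A *ᵥ y := by
    rw [dotProduct_mulVec, dotProduct_comm, ← mulVec_transpose, hAs.eq]
  have hp' : 2 * α p * (h ⬝ᵥ A *ᵥ y : ℤ) =
      ∑ q : Idx m, if q = p then 2 * α q * (h ⬝ᵥ A *ᵥ y : ℤ) else 0 := by simp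
  rw [hp', ← sub_eq_iff_eq_add, ← Finset.sum_sub_distrib, ← Finset.sum_sub_distrib,
    ← Finset.sum_sub_distrib]
  refine Finset.sum_congr rfl fun q _ => ?_
  obtain ⟨⟨i, i'⟩, hi⟩ := p
  obtain ⟨⟨a, b⟩, hab⟩ := q
  simp only at hp
  subst hp
  simp only [quadZ_eq_dotProduct, Subtype.mk.injEq, Prod.mk.injEq, Function.update_apply]
  by_cases ha : a = i <;> by_cases hb : b = i <;>
    simp [ha, hb, mulVec_add, hsymm] <;> ring

lemma phase_update_mixed {m n : ℕ} (A : Matrix (Fin n) (Fin n) ℤ) (hAs : A.IsSymm)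
    (α : Idx m → ℝ) (p : Idx m) (hp : p.1.1 < p.1.2) (x : Fin m → Fin n → ℤ) (y z : Fin n → ℤ) :
    ∑ q : Idx m, α q * (quadZ A (Function.update (Function.update x p.1.1 y) p.1.2 z)
        q.1.1 q.1.2 : ℝ) =
    α p * (z ⬝ᵥ A *ᵥ y : ℤ) +
      (∑ q : Idx m, α q * (quadZ A (Function.update (Function.update x p.1.1 y) p.1.2 0)
        q.1.1 q.1.2 : ℝ)) +
      ((∑ q : Idx m, α q * (quadZ A (Function.update (Function.update x p.1.1 0) p.1.2 z)
        q.1.1 q.1.2 : ℝ)) -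
      ∑ q : Idx m, α q * (quadZ A (Function.update (Function.update x p.1.1 0) p.1.2 0)
        q.1.1 q.1.2 : ℝ)) := by
  have hsymm : y ⬝ᵥ A *ᵥ z = z ⬝ᵥ A *ᵥ y := by
    rw [dotProduct_mulVec, dotProduct_comm, ← mulVec_transpose, hAs.eq]
  have hp' : α p * (z ⬝ᵥ A *ᵥ y : ℤ) =
      ∑ q : Idx m, if q = p then α q * (z ⬝ᵥ A *ᵥ y : ℤ) else 0 := by simp
  rw [hp', ← Finset.sum_sub_distrib, ← Finset.sum_add_distrib, ← Finset.sum_add_distrib]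
  refine Finset.sum_congr rfl fun q _ => ?_
  obtain ⟨⟨i, j⟩, hi⟩ := p
  obtain ⟨⟨a, b⟩, hab⟩ := q
  simp only at hp hab
  simp only [quadZ_eq_dotProduct, Subtype.mk.injEq, Prod.mk.injEq, Function.update_apply]
  rcases eq_or_ne a i with rfl | hai
  · rcases eq_or_ne b j with rfl | hbj
    · simp [hp.ne, hsymm]
    · by_cases hba : b = a <;> simp [hp.ne, hbj, hba]
  · rcases eq_or_ne a j with rfl | haj
    · have hbi : b ≠ i := (hp.trans_le hab).ne'
      by_cases hba : b = a <;> simp [hai, hbi, hba]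
    · by_cases hbj : b = j <;> by_cases hbi : b = i <;> simp [hai, haj, hbj, hbi, hp.ne]

lemma exists_card_mul_norm_expSum_le {m n : ℕ} (A : Matrix (Fin n) (Fin n) ℤ) (hAs : A.IsSymm)
    (hA : A.det ≠ 0) (c N : ℕ) (hc : ∀ t, ∑ s, |A s t| ≤ c) (α : Idx m → ℝ) (p : Idx m) :
    ∃ β : ℝ, |α p| ≤ |β| ∧ |β| ≤ 2 * |α p| ∧
      ((2 * N + 1 : ℝ) ^ n) *
        ‖∑ x ∈ (Finset.Icc (fun _ _ => -(N : ℤ)) (fun _ _ => (N : ℤ)) :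
            Finset (Fin m → Fin n → ℤ)),
          eR (∑ p : Idx m, α p * (quadZ A x p.1.1 p.1.2 : ℝ))‖ ≤
      ((2 * N + 1 : ℝ) ^ n) ^ m *
        √((∑ k ∈ Finset.Icc (-(c * (2 * N) : ℕ) : ℤ) (c * (2 * N) : ℕ),
          geomWeight (2 * N + 1) (β * k)) ^ n) := by
  set B := Finset.Icc (fun _ : Fin n => -(N : ℤ)) (fun _ => (N : ℤ)) with hB
  have hcard : (B.card : ℝ) = (2 * N + 1 : ℝ) ^ n := by
    rw [hB, Pi.card_Icc]
    simp only [Int.card_Icc, Finset.prod_const, Finset.card_univ, Fintype.card_fin]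
    rw [show ((N : ℤ) + 1 - -N).toNat = 2 * N + 1 by omega]
    push_cast
    rfl
  have hbox : (Finset.Icc (fun _ _ => -(N : ℤ)) (fun _ _ => (N : ℤ)) :
      Finset (Fin m → Fin n → ℤ)) = Fintype.piFinset fun _ => B := rfl
  rw [← hcard, hbox]
  rcases p.2.eq_or_lt with hp | hp
  · refine ⟨2 * α p, ?_, ?_, ?_⟩
    · rw [abs_mul, abs_two]
      linarith [abs_nonneg (α p)]
    · rw [abs_mul, abs_two]
    · have h := card_mul_norm_sum_piFinset_le B p.1.1
        (fun x => eR (∑ p : Idx m, α p * (quadZ A x p.1.1 p.1.2 : ℝ))) _ fun x =>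
          Real.le_sqrt_of_sq_le (norm_sum_quadratic_sq_le A hA c N hc (2 * α p)
            (fun y => ∑ q : Idx m, α q * (quadZ A (Function.update x p.1.1 y) q.1.1 q.1.2 : ℝ))
            (phase_update_diag A hAs α p hp x))
      rwa [Fintype.card_fin] at h
  · refine ⟨α p, le_rfl, by linarith [abs_nonneg (α p)], ?_⟩
    have h := card_mul_norm_sum_piFinset_le₂ B p.1.1 p.1.2
      (fun x => eR (∑ p : Idx m, α p * (quadZ A x p.1.1 p.1.2 : ℝ)))
      (√((∑ k ∈ Finset.Icc (-(c * (2 * N) : ℕ) : ℤ) (c * (2 * N) : ℕ),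
          geomWeight (2 * N + 1) (α p * k)) ^ n)) fun x => by
        rw [Finset.sum_congr rfl fun y _ => Finset.sum_congr rfl fun z _ =>
          congrArg eR (phase_update_mixed A hAs α p hp x y z)]
        rw [← Real.sqrt_sq (Nat.cast_nonneg B.card), ← Real.sqrt_mul (sq_nonneg _)]
        exact Real.le_sqrt_of_sq_le (norm_sum_mixed_sq_le A hA c N hc (α p) _ _)
    rwa [Fintype.card_fin] at h

lemma exists_sum_geomWeight_le (c : ℕ) {δ : ℝ} (hδ : 0 < δ) :
    ∃ K : ℝ, 0 < K ∧ ∀ P : ℝ, 1 ≤ P → ∀ N : ℕ, (N : ℝ) ≤ P → ∀ a β : ℝ, 0 < a → a < P⁻¹ →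
      a ≤ |β| → |β| ≤ 2 * a →
      ∑ k ∈ Finset.Icc (-(c * (2 * N) : ℕ) : ℤ) (c * (2 * N) : ℕ),
        geomWeight (2 * N + 1) (β * k) ≤ K * (P ^ δ * a⁻¹) := by
  refine ⟨(2 * (4 * c : ℕ) + 3) * (20 + 8 * ((4 * c : ℝ) ^ δ / δ)), by positivity, ?_⟩
  intro P hP N hN a β ha haP hβ hβ2
  have hP0 : 0 < P := by linarith
  have hβ0 : β ≠ 0 := abs_pos.mp (ha.trans_le hβ)
  have haP' : a * P ≤ 1 := by
    have := mul_le_mul_of_nonneg_right haP.le hP0.le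
    rwa [inv_mul_cancel₀ hP0.ne'] at this
  have hZ : |β| * (c * (2 * N) : ℕ) ≤ (4 * c : ℕ) := by
    push_cast
    calc |β| * (c * (2 * N)) ≤ 2 * a * (c * (2 * P)) := by gcongr
      _ = 4 * c * (a * P) := by ring
      _ ≤ 4 * c * 1 := by gcongr
      _ = 4 * c := mul_one _
  refine (sum_geomWeight_le (by positivity) hβ0 _ _ hZ).trans ?_
  have hPδ : 1 ≤ P ^ δ := Real.one_le_rpow hP hδ.le
  have hlog : Real.log (2 * (c * (2 * N)) : ℕ) ≤ (4 * c : ℝ) ^ δ / δ * P ^ δ := by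
    refine (Real.log_le_rpow_div (Nat.cast_nonneg _) hδ).trans ?_
    rw [div_mul_eq_mul_div, ← Real.mul_rpow (by positivity) hP0.le]
    gcongr
    push_cast
    nlinarith [(Nat.cast_nonneg c : (0 : ℝ) ≤ c)]
  have hM : 4 * (2 * N + 1 : ℝ) ≤ 12 * (P ^ δ * a⁻¹) := by
    have h1 : P ≤ a⁻¹ := by
      rw [le_inv_comm₀ hP0 ha]
      exact haP.le
    have h2 : a⁻¹ ≤ P ^ δ * a⁻¹ := le_mul_of_one_le_left (by positivity) hPδ
    linarith
  have hrec : 8 / |β| * (1 + Real.log (2 * (c * (2 * N)) : ℕ)) ≤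
      8 * a⁻¹ * (P ^ δ + (4 * c : ℝ) ^ δ / δ * P ^ δ) := by
    rw [← div_eq_mul_inv]
    have := Real.log_natCast_nonneg (2 * (c * (2 * N)))
    gcongr
  calc (2 * ((4 * c : ℕ) : ℝ) + 3) * (4 * (2 * N + 1 : ℝ) +
        8 / |β| * (1 + Real.log (2 * (c * (2 * N)) : ℕ)))
      ≤ (2 * ((4 * c : ℕ) : ℝ) + 3) * (12 * (P ^ δ * a⁻¹) +
        8 * a⁻¹ * (P ^ δ + (4 * c : ℝ) ^ δ / δ * P ^ δ)) := by gcongr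
    _ = _ := by ring

lemma norm_expSum_le_card {m n : ℕ} (N : ℕ) (f : (Fin m → Fin n → ℤ) → ℝ) :
    ‖∑ x ∈ Finset.Icc (fun _ _ => -(N : ℤ)) (fun _ _ => (N : ℤ)), eR (f x)‖ ≤
      ((2 * N + 1 : ℝ) ^ n) ^ m := by
  refine (norm_sum_le _ _).trans (le_of_eq ?_)
  simp only [norm_eR, Finset.sum_const, nsmul_eq_mul, mul_one, Pi.card_Icc, Int.card_Icc,
    Finset.prod_const, Finset.card_univ, Fintype.card_fin]
  rw [show ((N : ℤ) + 1 - -N).toNat = 2 * N + 1 by omega]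
  push_cast
  rfl

lemma two_mul_add_one_pow_le {P : ℝ} (hP : 1 ≤ P) {N : ℕ} (hN : (N : ℝ) ≤ P) (n l : ℕ) :
    ((2 * N + 1 : ℝ) ^ n) ^ l ≤ (3 ^ n) ^ l * P ^ ((l : ℝ) * n) := by
  calc ((2 * N + 1 : ℝ) ^ n) ^ l ≤ ((3 * P) ^ n) ^ l := by gcongr; linarith
    _ = (3 ^ n) ^ l * P ^ ((l : ℝ) * n) := by
      rw [mul_pow, mul_pow, ← pow_mul P, mul_comm n l, ← Real.rpow_natCast P]
      push_cast
      rfl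

lemma exists_abs_eq_maxAbs {m : ℕ} [NeZero m] (α : Idx m → ℝ) : ∃ p, |α p| = maxAbs α :=
  exists_eq_ciSup_of_finite

/-- The bound with the stronger exponent `-n / 2`. -/
lemma exists_norm_expSum_le (m n : ℕ) [NeZero m] [NeZero n]
    (A : Matrix (Fin n) (Fin n) ℤ) (hAs : A.IsSymm) (hA : A.det ≠ 0) (ε : ℝ) (hε : 0 < ε) :
    ∃ K : ℝ, 0 < K ∧
      ∀ P : ℝ, 1 ≤ P → ∀ N : ℕ, (N : ℝ) ≤ P → ∀ α : Idx m → ℝ, 0 < maxAbs α → maxAbs α < P⁻¹ →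
        ‖∑ x ∈ (Finset.Icc (fun _ _ => -(N : ℤ)) (fun _ _ => (N : ℤ)) :
              Finset (Fin m → Fin n → ℤ)),
            eR (∑ p : Idx m, α p * (quadZ A x p.1.1 p.1.2 : ℝ))‖ ≤
          K * P ^ ((m : ℝ) * (n : ℝ) + ε) * (P ^ 2 * maxAbs α) ^ (-(n : ℝ) / 2) := by
  have hn : (0 : ℝ) < n := by exact_mod_cast Nat.pos_of_neZero n
  have hδ : 0 < 2 * ε / n := by positivity
  obtain ⟨c, hc⟩ : ∃ c : ℕ, ∀ t, ∑ s, |A s t| ≤ c := by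
    refine ⟨(∑ t, ∑ s, |A s t|).toNat, fun t => ?_⟩
    refine le_trans ?_ (Int.self_le_toNat _)
    exact Finset.single_le_sum (f := fun t => ∑ s, |A s t|)
      (fun _ _ => Finset.sum_nonneg fun _ _ => abs_nonneg _) (Finset.mem_univ t)
  obtain ⟨K, hK, hW⟩ := exists_sum_geomWeight_le c hδ
  obtain ⟨l, rfl⟩ : ∃ l, m = l + 1 := Nat.exists_eq_succ_of_ne_zero (NeZero.ne m)
  refine ⟨(3 ^ n) ^ l * K ^ ((n : ℝ) / 2), by positivity, ?_⟩
  intro P hP N hN α hα hαP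
  have hP0 : 0 < P := by linarith
  obtain ⟨p, hp⟩ := exists_abs_eq_maxAbs α
  obtain ⟨β, hβ1, hβ2, hβ⟩ := exists_card_mul_norm_expSum_le A hAs hA c N hc α p
  rw [hp] at hβ1 hβ2
  have hW' := hW P hP N hN (maxAbs α) β hα hαP hβ1 hβ2
  set a := maxAbs α with ha
  set W := ∑ k ∈ Finset.Icc (-(c * (2 * N) : ℕ) : ℤ) (c * (2 * N) : ℕ),
    geomWeight (2 * N + 1) (β * k)
  set S := ‖∑ x ∈ (Finset.Icc (fun _ _ => -(N : ℤ)) (fun _ _ => (N : ℤ)) :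
    Finset (Fin (l + 1) → Fin n → ℤ)),
      eR (∑ p : Idx (l + 1), α p * (quadZ A x p.1.1 p.1.2 : ℝ))‖
  have hW0 : 0 ≤ W := Finset.sum_nonneg fun _ _ => geomWeight_nonneg (by positivity) _
  have hS : S ≤ ((2 * N + 1 : ℝ) ^ n) ^ l * √(W ^ n) := by
    refine le_of_mul_le_mul_left (hβ.trans (le_of_eq ?_)) (by positivity : 0 < (2 * N + 1 : ℝ) ^ n)
    rw [pow_succ]
    ring
  have hsqrt : √(W ^ n) ≤ K ^ ((n : ℝ) / 2) * (P ^ ε * a ^ (-(n : ℝ) / 2)) := by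
    have h1 : √(W ^ n) = W ^ ((n : ℝ) / 2) := by
      rw [Real.sqrt_eq_rpow, ← Real.rpow_natCast, ← Real.rpow_mul hW0]
      ring_nf
    rw [h1]
    refine (Real.rpow_le_rpow hW0 hW' (by positivity)).trans (le_of_eq ?_)
    rw [Real.mul_rpow hK.le (by positivity), Real.mul_rpow (by positivity) (by positivity),
      ← Real.rpow_mul hP0.le, Real.inv_rpow hα.le, ← Real.rpow_neg hα.le]
    congr 3
    · field_simp
    · ring
  have hcard : ((2 * N + 1 : ℝ) ^ n) ^ l ≤ (3 ^ n) ^ l * P ^ ((l : ℝ) * n) :=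
    two_mul_add_one_pow_le hP hN n l
  have hpow : P ^ (((l + 1 : ℕ) : ℝ) * n + ε) * (P ^ 2 * a) ^ (-(n : ℝ) / 2) =
      P ^ ((l : ℝ) * n) * (P ^ ε * a ^ (-(n : ℝ) / 2)) := by
    rw [Real.mul_rpow (by positivity) hα.le, ← Real.rpow_natCast P 2, ← Real.rpow_mul hP0.le,
      ← mul_assoc, ← mul_assoc, ← Real.rpow_add hP0, ← Real.rpow_add hP0]
    congr 2
    push_cast
    ring
  rw [mul_assoc, hpow]
  calc S ≤ ((2 * N + 1 : ℝ) ^ n) ^ l * √(W ^ n) := hS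
    _ ≤ ((3 ^ n) ^ l * P ^ ((l : ℝ) * n)) *
        (K ^ ((n : ℝ) / 2) * (P ^ ε * a ^ (-(n : ℝ) / 2))) := by gcongr
    _ = _ := by ring

/-- bound \eqref{depris} for the homogeneous exponential sum. -/
theorem stmt19 (m n : ℕ) [NeZero m] [NeZero n]
    (A : Matrix (Fin n) (Fin n) ℤ) (hAs : A.IsSymm)
    (hApd : (A.map ((↑) : ℤ → ℝ)).PosDef)
    (ε : ℝ) (hε : 0 < ε) :
    ∃ K : ℝ, 0 < K ∧
      ∀ P : ℝ, 1 ≤ P → ∀ α : Idx m → ℝ, 0 < maxAbs α → maxAbs α < P⁻¹ →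
        ‖∑ x ∈ (Finset.Icc (fun _ _ => -⌊P⌋) (fun _ _ => ⌊P⌋) :
              Finset (Fin m → Fin n → ℤ)),
            eR (∑ p : Idx m, α p * (quadZ A x p.1.1 p.1.2 : ℝ))‖ ≤
          K * P ^ ((m : ℝ) * (n : ℝ) + ε) *
            (P ^ 2 * maxAbs α) ^ (-(n : ℝ) / (2 * ((m : ℝ) * ((m : ℝ) + 1) / 2))) := by
  have hA : A.det ≠ 0 := by
    have h := hApd.det_pos
    rw [show (A.map ((↑) : ℤ → ℝ)).det = (A.det : ℝ) from
      ((Int.castRingHom ℝ).map_det A).symm] at h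
    exact_mod_cast h.ne'
  obtain ⟨K, hK, hbound⟩ := exists_norm_expSum_le m n A hAs hA ε hε
  have hm : (1 : ℝ) ≤ m := by exact_mod_cast Nat.one_le_iff_ne_zero.mpr (NeZero.ne m)
  have hn : (0 : ℝ) ≤ n := Nat.cast_nonneg n
  refine ⟨K + (3 ^ n) ^ m, by positivity, fun P hP α hα hαP => ?_⟩
  have hP0 : 0 < P := by linarith
  obtain ⟨N, hN⟩ := Int.eq_ofNat_of_zero_le (Int.floor_nonneg.mpr hP0.le)
  have hNP : (N : ℝ) ≤ P := by
    have := Int.floor_le P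
    rw [hN] at this
    exact_mod_cast this
  rw [hN]
  have ht : 0 < P ^ 2 * maxAbs α := by positivity
  rcases le_or_gt 1 (P ^ 2 * maxAbs α) with h | h
  · refine (hbound P hP N hNP α hα hαP).trans ?_
    gcongr ?_ * ?_ * ?_
    · exact le_add_of_nonneg_right (by positivity)
    · refine Real.rpow_le_rpow_of_exponent_le h ?_
      rw [neg_div, neg_div, neg_le_neg_iff]
      gcongr
      nlinarith
  · have h1 : 1 ≤ (P ^ 2 * maxAbs α) ^ (-(n : ℝ) / (2 * ((m : ℝ) * ((m : ℝ) + 1) / 2))) := by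
      refine Real.one_le_rpow_of_pos_of_le_one_of_nonpos ht h.le ?_
      rw [neg_div, neg_nonpos]
      positivity
    have h2 : P ^ ((m : ℝ) * n) ≤ P ^ ((m : ℝ) * n + ε) :=
      Real.rpow_le_rpow_of_exponent_le hP (by linarith)
    refine (norm_expSum_le_card N _).trans ((two_mul_add_one_pow_le hP hNP n m).trans ?_)
    calc (3 ^ n) ^ m * P ^ ((m : ℝ) * n)
        ≤ (K + (3 ^ n) ^ m) * P ^ ((m : ℝ) * n + ε) * 1 := by
          rw [mul_one]
          gcongr
          exact le_add_of_nonneg_left hK.le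
      _ ≤ _ := by gcongr
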